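/- A finite simple graph G contains no cycle of even length if and only if G is a cactus graph (any two distinct cycles of G intersect in at most one vertex) all of whose cycles have odd length. In particular, if a finite simple graph contains two distinct cycles sharing at least two vertices, then it contains a cycle of even length. -/

import Mathlib

open SimpleGraph

/-!
Let two cycles share two vertices, and let one of them have an edge outside the other, `C`. The
common vertices cut the first cycle into two paths joining vertices of `C`; the one containing the
extra edge has a subpath that meets `C` only in its ends and still leaves `C`. This ear and the two
arcs into which its ends cut `C` have lengths `r`, `p`, `q`, and form three cycles, of lengths
`p + q`, `r + p` and `r + q`. The sum of these is even, so one of them is even.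
-/

/-- `G` contains a cycle of even length; the odd cycle graphs are those for which this fails. -/
def HasEvenCycle {V : Type*} (G : SimpleGraph V) : Prop :=
  ∃ (v : V) (c : G.Walk v v), c.IsCycle ∧ Even c.length

/-- A path with both ends on the subgraph `H`, without inner vertices on `H`, and not contained in
`H`; also known as an `H`-path. Having an edge outside `H` rules out trivial paths and single edges
of `H`. -/
structure IsEar {V : Type*} {G : SimpleGraph V} (H : G.Subgraph) {a b : V} (r : G.Walk a b) :
    Prop where
  isPath : r.IsPath
  start_mem : a ∈ H.verts
  end_mem : b ∈ H.verts
  eq_or_eq_of_mem : ∀ z ∈ r.support, z ∈ H.verts → z = a ∨ z = b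
  exists_edge_notMem : ∃ e ∈ r.edges, e ∉ H.edgeSet

section

variable {V : Type*} {G : SimpleGraph V} {H : G.Subgraph} {a b u v x y : V}

theorem start_notMem_tail_support_of_isPath {p : G.Walk u v} (hp : p.IsPath) :
    u ∉ p.support.tail :=
  (List.nodup_cons.mp (p.cons_tail_support.symm ▸ hp.support_nodup)).1

namespace IsEar

variable {r : G.Walk a b}

theorem ne (hr : IsEar H r) : a ≠ b := by
  rintro rfl
  obtain ⟨e, he, -⟩ := hr.exists_edge_notMem
  simp [(Walk.isPath_iff_nil.mp hr.isPath).eq_nil] at he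

theorem isCycle_append (hr : IsEar H r) {p : G.Walk b a} (hp : p.IsPath)
    (hpH : p.toSubgraph ≤ H) : (r.append p).IsCycle := by
  refine hr.isPath.isCycle_append hp (fun z hzr hzp ↦ ?_) ?_
  · have hzH : z ∈ H.verts := hpH.1 (p.mem_verts_toSubgraph.mpr (List.mem_of_mem_tail hzp))
    rcases hr.eq_or_eq_of_mem z (List.mem_of_mem_tail hzr) hzH with rfl | rfl
    · exact start_notMem_tail_support_of_isPath hr.isPath hzr
    · exact start_notMem_tail_support_of_isPath hp hzp
  · by_contra! hlen
    obtain ⟨e, her, heH⟩ := hr.exists_edge_notMem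
    have hrp : r = p.reverse := Walk.eq_of_length_le_one hlen.1 (by simpa using hlen.2)
    have hep : e ∈ p.edges := by simpa [hrp] using her
    exact heH (Subgraph.edgeSet_mono hpH (p.mem_edges_toSubgraph.mpr hep))

end IsEar

theorem exists_isEar_of_isPath {p : G.Walk u v} (hp : p.IsPath) (hu : u ∈ H.verts)
    (hv : v ∈ H.verts) {e : Sym2 V} (hep : e ∈ p.edges) (heH : e ∉ H.edgeSet) :
    ∃ (a b : V) (r : G.Walk a b), IsEar H r := by
  induction hn : p.length using Nat.strong_induction_on generalizing u v with
  | _ n ih =>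
    by_cases! hinner : ∃ z ∈ p.support, z ∈ H.verts ∧ z ≠ u ∧ z ≠ v
    · obtain ⟨z, hzp, hzH, hzu, hzv⟩ := hinner
      obtain ⟨p₁, p₂, rfl⟩ := Walk.mem_support_iff_exists_append.mp hzp
      have hp₁ := Walk.not_nil_iff_lt_length.mp (p₁.not_nil_of_ne hzu.symm)
      have hp₂ := Walk.not_nil_iff_lt_length.mp (p₂.not_nil_of_ne hzv)
      rw [Walk.length_append] at hn
      rw [Walk.edges_append, List.mem_append] at hep
      rcases hep with he₁ | he₂
      · exact ih p₁.length (by lia) hp.of_append_left hu hzH he₁ rfl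
      · exact ih p₂.length (by lia) hp.of_append_right hzH hv he₂ rfl
    · exact ⟨u, v, p, hp, hu, hv, fun z hzp hzH ↦ or_iff_not_imp_left.mpr (hinner z hzp hzH),
        e, hep, heH⟩

theorem exists_isCycle_append_toSubgraph_eq {c : G.Walk u u} (hc : c.IsCycle)
    (hx : x ∈ c.support) (hy : y ∈ c.support) (hxy : x ≠ y) :
    ∃ (p : G.Walk x y) (q : G.Walk y x), p.IsPath ∧ q.IsPath ∧ (p.append q).IsCycle ∧
      (p.append q).toSubgraph = c.toSubgraph := by
  classical
  have hy' : y ∈ (c.rotate x hx).support := (c.mem_support_rotate_iff x hx).mpr hy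
  obtain ⟨p, q, hpq⟩ := Walk.mem_support_iff_exists_append.mp hy'
  have hcycle : (p.append q).IsCycle := hpq ▸ hc.rotate hx
  exact ⟨p, q, hcycle.isPath_of_append_left (q.not_nil_of_ne hxy.symm),
    hcycle.isPath_of_append_right (p.not_nil_of_ne hxy), hcycle, hpq ▸ c.toSubgraph_rotate hx⟩

theorem exists_isEar_of_isCycle {c : G.Walk u u} (hc : c.IsCycle) (hxc : x ∈ c.support)
    (hyc : y ∈ c.support) (hxy : x ≠ y) (hxH : x ∈ H.verts) (hyH : y ∈ H.verts) {e : Sym2 V}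
    (hec : e ∈ c.edges) (heH : e ∉ H.edgeSet) :
    ∃ (a b : V) (r : G.Walk a b), IsEar H r := by
  obtain ⟨p, q, hp, hq, -, hpq⟩ := exists_isCycle_append_toSubgraph_eq hc hxc hyc hxy
  have hepq : e ∈ p.edges ∨ e ∈ q.edges := by
    rwa [← List.mem_append, ← Walk.edges_append, ← Walk.mem_edges_toSubgraph, hpq,
      Walk.mem_edges_toSubgraph]
  rcases hepq with hep | heq
  · exact exists_isEar_of_isPath hp hxH hyH hep heH
  · exact exists_isEar_of_isPath hq hyH hxH heq heH

theorem IsEar.hasEvenCycle {c : G.Walk u u} (hc : c.IsCycle) {r : G.Walk a b}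
    (hr : IsEar c.toSubgraph r) : HasEvenCycle G := by
  obtain ⟨p, q, hp, hq, hcycle, hpq⟩ := exists_isCycle_append_toSubgraph_eq hc
    (c.mem_verts_toSubgraph.mp hr.start_mem) (c.mem_verts_toSubgraph.mp hr.end_mem) hr.ne
  rw [Walk.toSubgraph_append] at hpq
  have hrq : (r.append q).IsCycle := hr.isCycle_append hq (hpq ▸ le_sup_right)
  have hrp : (r.append p.reverse).IsCycle := hr.isCycle_append hp.reverse <| by
    rw [Walk.toSubgraph_reverse, ← hpq]
    exact le_sup_left
  have hparity : Even (p.append q).length ∨ Even (r.append q).length ∨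
      Even (r.append p.reverse).length := by
    simp only [Walk.length_append, Walk.length_reverse]
    grind
  rcases hparity with heven | heven | heven
  exacts [⟨_, _, hcycle, heven⟩, ⟨_, _, hrq, heven⟩, ⟨_, _, hrp, heven⟩]

theorem hasEvenCycle_of_not_edges_subset {c₁ : G.Walk u u} {c₂ : G.Walk v v} (hc₁ : c₁.IsCycle)
    (hc₂ : c₂.IsCycle) (hx₁ : x ∈ c₁.support) (hx₂ : x ∈ c₂.support) (hy₁ : y ∈ c₁.support)
    (hy₂ : y ∈ c₂.support) (hxy : x ≠ y) (hedges : ¬ c₁.edges ⊆ c₂.edges) : HasEvenCycle G := by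
  obtain ⟨e, he₁, he₂⟩ : ∃ e ∈ c₁.edges, e ∉ c₂.edges := by
    simpa [List.subset_def] using hedges
  obtain ⟨a, b, r, hr⟩ := exists_isEar_of_isCycle hc₁ hx₁ hy₁ hxy
    (c₂.mem_verts_toSubgraph.mpr hx₂) (c₂.mem_verts_toSubgraph.mpr hy₂) he₁
    (c₂.mem_edges_toSubgraph.not.mpr he₂)
  exact hr.hasEvenCycle hc₂

theorem hasEvenCycle_of_one_lt_card_inter [DecidableEq V] {c₁ : G.Walk u u} {c₂ : G.Walk v v}
    (hc₁ : c₁.IsCycle) (hc₂ : c₂.IsCycle) (hne : c₁.edges.toFinset ≠ c₂.edges.toFinset)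
    (hcard : 1 < (c₁.support.toFinset ∩ c₂.support.toFinset).card) : HasEvenCycle G := by
  obtain ⟨x, hx, y, hy, hxy⟩ := Finset.one_lt_card.mp hcard
  simp only [Finset.mem_inter, List.mem_toFinset] at hx hy
  by_cases h₁₂ : c₁.edges ⊆ c₂.edges
  · have h₂₁ : ¬ c₂.edges ⊆ c₁.edges := fun h₂₁ ↦
      hne (List.toFinset.ext fun _ ↦ ⟨@h₁₂ _, @h₂₁ _⟩)
    exact hasEvenCycle_of_not_edges_subset hc₂ hc₁ hx.2 hx.1 hy.2 hy.1 hxy h₂₁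
  · exact hasEvenCycle_of_not_edges_subset hc₁ hc₂ hx.1 hx.2 hy.1 hy.2 hxy h₁₂

end

theorem oddCycleGraph_iff_cactus_with_odd_cycles_general
    {V : Type*} [DecidableEq V] (G : SimpleGraph V) :
    ((¬ ∃ (v : V) (w : G.Walk v v), w.IsCycle ∧ Even w.length) ↔
      ((∀ (u v : V) (w₁ : G.Walk u u) (w₂ : G.Walk v v),
          w₁.IsCycle → w₂.IsCycle → w₁.edges.toFinset ≠ w₂.edges.toFinset →
          (w₁.support.toFinset ∩ w₂.support.toFinset).card ≤ 1) ∧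
        (∀ (v : V) (w : G.Walk v v), w.IsCycle → Odd w.length))) ∧
    (∀ (u v : V) (w₁ : G.Walk u u) (w₂ : G.Walk v v),
        w₁.IsCycle → w₂.IsCycle → w₁.edges.toFinset ≠ w₂.edges.toFinset →
        2 ≤ (w₁.support.toFinset ∩ w₂.support.toFinset).card →
        ∃ (x : V) (w : G.Walk x x), w.IsCycle ∧ Even w.length) := by
  refine ⟨⟨fun hG ↦ ⟨fun u v c₁ c₂ hc₁ hc₂ hne ↦ ?_, fun v c hc ↦ ?_⟩, ?_⟩, ?_⟩
  · exact not_lt.mp fun hcard ↦ hG (hasEvenCycle_of_one_lt_card_inter hc₁ hc₂ hne hcard)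
  · exact Nat.not_even_iff_odd.mp fun heven ↦ hG ⟨v, c, hc, heven⟩
  · rintro ⟨-, hodd⟩ ⟨v, c, hc, heven⟩
    exact Nat.not_even_iff_odd.mpr (hodd v c hc) heven
  · exact fun u v c₁ c₂ ↦ hasEvenCycle_of_one_lt_card_inter

/-- A finite simple graph contains no cycle of even length if and only if it is a cactus
graph (any two distinct cycles intersect in at most one vertex) all of whose cycles are
odd. In particular, if a graph contains two distinct cycles sharing at least two vertices,
then it contains a cycle of even length. Two cycles are distinct when their edge sets
differ. -/
theorem oddCycleGraph_iff_cactus_with_odd_cycles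
    {V : Type*} [Fintype V] [DecidableEq V] (G : SimpleGraph V) :
    ((¬ ∃ (v : V) (w : G.Walk v v), w.IsCycle ∧ Even w.length) ↔
      ((∀ (u v : V) (w₁ : G.Walk u u) (w₂ : G.Walk v v),
          w₁.IsCycle → w₂.IsCycle → w₁.edges.toFinset ≠ w₂.edges.toFinset →
          (w₁.support.toFinset ∩ w₂.support.toFinset).card ≤ 1) ∧
        (∀ (v : V) (w : G.Walk v v), w.IsCycle → Odd w.length))) ∧
    (∀ (u v : V) (w₁ : G.Walk u u) (w₂ : G.Walk v v),
        w₁.IsCycle → w₂.IsCycle → w₁.edges.toFinset ≠ w₂.edges.toFinset →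
        2 ≤ (w₁.support.toFinset ∩ w₂.support.toFinset).card →
        ∃ (x : V) (w : G.Walk x x), w.IsCycle ∧ Even w.length) :=
  oddCycleGraph_iff_cactus_with_odd_cycles_general G
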